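/- There exists a constant C > 0 such that for all (r,z), (r',z') ∈ Π with (r,z) ≠ (r',z'), | G(r,z,r',z') − (√(r r')/(2π)) [ log(1/σ) + log(1 + √(σ² + 1)) ] | ≤ C √(r r'), where σ = √((r−r')² + (z−z')²) / (2√(r r')). -/

import Mathlib

/-!
Write `a = √(r r')`. Since `1 - cos θ = 2 sin² (θ/2)`, the radicand in the kernel equals
`4 a² (σ² + sin² (θ/2))`, so `G = a / (8π) · ∫_{-π}^{π} cos θ / √(σ² + sin² (θ/2)) dθ`.
Replacing the numerator `cos θ` by `cos (θ/2)` makes the integrand an exact derivative, with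
integral `4 arsinh (1/σ) = 4 [log (1/σ) + log (1 + √(σ² + 1))]`: this is the whole logarithmic term.
The difference of numerators is at most `2 |sin (θ/2)|`, so the error integrand is bounded by `2`
uniformly in `σ`, which leaves an error of at most `a / (8π) · 4π = a / 2`.
-/

open Real

/-- The kernel
`G(r,z,r',z') = (r r'/(4π)) ∫_{−π}^{π} cos θ · [(z−z')² + r² + r'² − 2 r r' cos θ]^{−1/2} dθ`. -/
noncomputable def Gker (r z r' z' : ℝ) : ℝ :=
  (r * r' / (4 * π)) *
    ∫ θ in (-π)..π,
      Real.cos θ / Real.sqrt ((z - z') ^ 2 + r ^ 2 + r' ^ 2 - 2 * r * r' * Real.cos θ)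

/-- `σ = √((r−r')² + (z−z')²) / (2√(r r'))`. -/
noncomputable def sigmaOf (r z r' z' : ℝ) : ℝ :=
  Real.sqrt ((r - r') ^ 2 + (z - z') ^ 2) / (2 * Real.sqrt (r * r'))

lemma radicand_pos {s : ℝ} (hs : 0 < s) (x : ℝ) : 0 < s ^ 2 + Real.sin (x / 2) ^ 2 := by
  positivity

lemma continuous_div_sqrt {s : ℝ} (hs : 0 < s) {f : ℝ → ℝ} (hf : Continuous f) :
    Continuous fun x : ℝ => f x / Real.sqrt (s ^ 2 + Real.sin (x / 2) ^ 2) := by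
  refine hf.div (by fun_prop) fun x => ?_
  exact (Real.sqrt_pos.2 (radicand_pos hs x)).ne'

lemma arsinh_one_div {s : ℝ} (hs : 0 < s) :
    Real.arsinh (1 / s) = Real.log (1 / s) + Real.log (1 + Real.sqrt (s ^ 2 + 1)) := by
  have h : Real.sqrt (1 + (1 / s) ^ 2) = (1 / s) * Real.sqrt (s ^ 2 + 1) := by
    rw [show 1 + (1 / s) ^ 2 = (1 / s) ^ 2 * (s ^ 2 + 1) by field_simp,
      Real.sqrt_mul (by positivity), Real.sqrt_sq (by positivity)]
  rw [Real.arsinh, h, ← Real.log_mul (by positivity) (by positivity)]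
  congr 1
  ring

/-- The singular part of the kernel, integrated through its primitive
`2 arsinh (sin (θ/2) / s)`. -/
lemma integral_singular_part {s : ℝ} (hs : 0 < s) :
    ∫ x in (-π)..π, Real.cos (x / 2) / Real.sqrt (s ^ 2 + Real.sin (x / 2) ^ 2) =
      4 * Real.arsinh (1 / s) := by
  have hd : ∀ x ∈ Set.uIcc (-π) π,
      HasDerivAt (fun x : ℝ => 2 * Real.arsinh (Real.sin (x / 2) / s))
        (Real.cos (x / 2) / Real.sqrt (s ^ 2 + Real.sin (x / 2) ^ 2)) x := by
    intro x _
    have h := ((((hasDerivAt_id x).div_const 2).sin.div_const s).arsinh).const_mul 2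
    refine h.congr_deriv ?_
    have hq : Real.sqrt (s ^ 2 + Real.sin (x / 2) ^ 2) =
        s * Real.sqrt (1 + (Real.sin (x / 2) / s) ^ 2) := by
      rw [show s ^ 2 + Real.sin (x / 2) ^ 2 = s ^ 2 * (1 + (Real.sin (x / 2) / s) ^ 2) by
        field_simp, Real.sqrt_mul (by positivity), Real.sqrt_sq hs.le]
    have hp : 0 < Real.sqrt (1 + (Real.sin (x / 2) / s) ^ 2) := Real.sqrt_pos.2 (by positivity)
    rw [hq]
    simp only [id, smul_eq_mul]
    field_simp
  rw [intervalIntegral.integral_eq_sub_of_hasDerivAt hd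
    ((continuous_div_sqrt hs (by fun_prop)).intervalIntegrable _ _)]
  rw [show -π / 2 = -(π / 2) by ring, Real.sin_neg, Real.sin_pi_div_two, neg_div,
    Real.arsinh_neg]
  ring

/-- The difference of the two numerators vanishes to first order in `sin (x/2)`, cancelling the
singularity of the denominator. -/
lemma abs_cos_sub_cos_half_le {x : ℝ} (hx : x ∈ Set.Icc (-π) π) :
    |Real.cos x - Real.cos (x / 2)| ≤ 2 * |Real.sin (x / 2)| := by
  have hc : 0 ≤ Real.cos (x / 2) :=
    Real.cos_nonneg_of_mem_Icc ⟨by linarith [hx.1], by linarith [hx.2]⟩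
  have hc1 := Real.cos_le_one (x / 2)
  have h2 : Real.cos x = 2 * Real.cos (x / 2) ^ 2 - 1 := by
    rw [← Real.cos_two_mul]; congr 1; ring
  have hsc := Real.sin_sq_add_cos_sq (x / 2)
  have hs : Real.sin (x / 2) ^ 2 ≤ |Real.sin (x / 2)| := by
    rw [← sq_abs]
    nlinarith [abs_nonneg (Real.sin (x / 2)), Real.abs_sin_le_one (x / 2)]
  -- `|cos x - c| = (1 - c) (1 + 2 c) ≤ 2 (1 - c) (1 + c) = 2 sin² (x/2)` for `c = cos (x/2)`
  rw [abs_le]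
  constructor <;> nlinarith

/-- Uniformly in `s`, the elliptic integral differs from its singular part by a bounded amount. -/
lemma abs_integral_sub_le {s : ℝ} (hs : 0 < s) :
    |(∫ x in (-π)..π, Real.cos x / Real.sqrt (s ^ 2 + Real.sin (x / 2) ^ 2)) -
      4 * Real.arsinh (1 / s)| ≤ 4 * π := by
  rw [← integral_singular_part hs, ← intervalIntegral.integral_sub
    ((continuous_div_sqrt hs (by fun_prop)).intervalIntegrable _ _)
    ((continuous_div_sqrt hs (by fun_prop)).intervalIntegrable _ _)]
  have h := intervalIntegral.norm_integral_le_of_norm_le_const (a := -π) (b := π) (C := 2)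
    (f := fun x : ℝ => Real.cos x / Real.sqrt (s ^ 2 + Real.sin (x / 2) ^ 2) -
      Real.cos (x / 2) / Real.sqrt (s ^ 2 + Real.sin (x / 2) ^ 2)) ?_
  · rw [Real.norm_eq_abs] at h
    refine h.trans (le_of_eq ?_)
    rw [abs_of_pos (by linarith [Real.pi_pos])]
    ring
  · intro x hx
    rw [Set.uIoc_of_le (by linarith [Real.pi_pos])] at hx
    have hq := Real.sqrt_pos.2 (radicand_pos hs x)
    rw [← sub_div, Real.norm_eq_abs, abs_div, abs_of_pos hq, div_le_iff₀ hq]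
    refine (abs_cos_sub_cos_half_le ⟨hx.1.le, hx.2⟩).trans ?_
    gcongr
    exact Real.abs_le_sqrt (by nlinarith)

lemma sigmaOf_pos {r z r' z' : ℝ} (hr : 0 < r) (hr' : 0 < r') (hne : (r, z) ≠ (r', z')) :
    0 < sigmaOf r z r' z' := by
  unfold sigmaOf
  have : 0 < (r - r') ^ 2 + (z - z') ^ 2 := by
    by_cases h : r = r'
    · have hz : z - z' ≠ 0 := fun hz => hne (by rw [h, sub_eq_zero.1 hz])
      positivity
    · have h' : r - r' ≠ 0 := sub_ne_zero.2 h
      positivity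
  positivity

/-- The kernel depends on the two points only through `√(r r')` and `σ`. -/
lemma Gker_eq {r r' : ℝ} (z z' : ℝ) (hr : 0 < r) (hr' : 0 < r') :
    Gker r z r' z' = Real.sqrt (r * r') / (8 * π) *
      ∫ x in (-π)..π,
        Real.cos x / Real.sqrt (sigmaOf r z r' z' ^ 2 + Real.sin (x / 2) ^ 2) := by
  have hrr : 0 < r * r' := mul_pos hr hr'
  have ha : 0 < Real.sqrt (r * r') := Real.sqrt_pos.2 hrr
  have ha2 : Real.sqrt (r * r') ^ 2 = r * r' := Real.sq_sqrt hrr.le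
  have hσ : 4 * (r * r') * sigmaOf r z r' z' ^ 2 = (r - r') ^ 2 + (z - z') ^ 2 := by
    unfold sigmaOf
    rw [div_pow, mul_pow, ha2, Real.sq_sqrt (by positivity)]
    field_simp
    ring
  have hint : ∀ x : ℝ,
      Real.cos x / Real.sqrt ((z - z') ^ 2 + r ^ 2 + r' ^ 2 - 2 * r * r' * Real.cos x) =
      (1 / (2 * Real.sqrt (r * r'))) *
        (Real.cos x / Real.sqrt (sigmaOf r z r' z' ^ 2 + Real.sin (x / 2) ^ 2)) := by
    intro x
    have hc : Real.cos x = 1 - 2 * Real.sin (x / 2) ^ 2 := by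
      have h2 : Real.cos x = 2 * Real.cos (x / 2) ^ 2 - 1 := by
        rw [← Real.cos_two_mul]; congr 1; ring
      linarith [Real.sin_sq_add_cos_sq (x / 2)]
    have hrad : (z - z') ^ 2 + r ^ 2 + r' ^ 2 - 2 * r * r' * Real.cos x =
        (2 * Real.sqrt (r * r')) ^ 2 *
          (sigmaOf r z r' z' ^ 2 + Real.sin (x / 2) ^ 2) := by
      rw [mul_pow, ha2, hc]
      linear_combination -hσ
    rw [hrad, Real.sqrt_mul (by positivity), Real.sqrt_sq (by positivity),
      div_mul_div_comm, one_mul]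
  unfold Gker
  simp_rw [hint]
  rw [intervalIntegral.integral_const_mul, ← mul_assoc]
  congr 1
  nth_rewrite 1 [← ha2]
  field_simp
  norm_num

/-- There is a constant `C > 0` such that for all distinct points of the half-plane,
`| G − (√(r r')/(2π)) [ log(1/σ) + log(1 + √(σ² + 1)) ] | ≤ C √(r r')`. -/
theorem Gker_expansion :
    ∃ C : ℝ, 0 < C ∧ ∀ r z r' z' : ℝ, 0 < r → 0 < r' → (r, z) ≠ (r', z') →
      |Gker r z r' z' -
          (Real.sqrt (r * r') / (2 * π)) *
            (Real.log (1 / sigmaOf r z r' z') +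
              Real.log (1 + Real.sqrt (sigmaOf r z r' z' ^ 2 + 1)))| ≤
        C * Real.sqrt (r * r') := by
  refine ⟨1 / 2, by norm_num, fun r z r' z' hr hr' hne => ?_⟩
  have hσ := sigmaOf_pos hr hr' hne
  have ha : 0 ≤ Real.sqrt (r * r') := Real.sqrt_nonneg _
  have hπ := Real.pi_pos
  rw [Gker_eq z z' hr hr', ← arsinh_one_div hσ]
  have h := abs_integral_sub_le hσ
  set I := ∫ x in (-π)..π,
    Real.cos x / Real.sqrt (sigmaOf r z r' z' ^ 2 + Real.sin (x / 2) ^ 2)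
  set A := Real.arsinh (1 / sigmaOf r z r' z')
  set a := Real.sqrt (r * r')
  have e : a / (8 * π) * I - a / (2 * π) * A = a / (8 * π) * (I - 4 * A) := by
    field_simp
    ring
  rw [e, abs_mul, abs_of_nonneg (by positivity)]
  calc a / (8 * π) * |I - 4 * A| ≤ a / (8 * π) * (4 * π) := by gcongr
    _ = 1 / 2 * a := by field_simp; ring
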